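/- Let A be an e-cyclic residuated lattice, with ~a := a\e (= e/a). If A satisfies the quasiequation (for all a, b ∈ A: a·(~a)·b ≤ e implies b ≤ e), then A is integrally closed, i.e., a\a = e and a/a = e for all a ∈ A. -/

import Mathlib

/-- A residuated lattice: a lattice-ordered monoid with left and right residuals,
i.e. `b ≤ a\c ↔ a*b ≤ c ↔ a ≤ c/b`.  `ldiv a c` denotes `a\c` and `rdiv c b` denotes `c/b`. -/
class ResiduatedLattice (α : Type*) extends Lattice α, Monoid α where
  ldiv : α → α → α
  rdiv : α → α → α
  le_ldiv_iff : ∀ a b c : α, b ≤ ldiv a c ↔ a * b ≤ c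
  le_rdiv_iff : ∀ a b c : α, a ≤ rdiv c b ↔ a * b ≤ c

open ResiduatedLattice

/-!
By residuation, `a * ∼a * b ≤ 1` is the same inequality as `∼a * b ≤ ∼a`, so the quasiequation says
that `b ≤ 1` whenever `∼a * b ≤ ∼a`. Negation turns `b * a ≤ a` into `∼a * b ≤ ∼a` and, applied
twice, turns `a * b ≤ a` into `∼∼a * b ≤ ∼∼a`. Here `∼a` may be taken with respect to any cyclic
element `d` in place of `1`.
-/

/-- `neg` is the negation `∼a = a\d = d/a` with respect to a cyclic element `d`, as in an `e`-cyclic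
residuated lattice for `d = e`. It is given by its universal property, so that no residuals of other
elements need to exist. -/
structure IsCyclicNeg {α : Type*} [Preorder α] [Mul α] (d : α) (neg : α → α) : Prop where
  le_neg_iff_mul_le : ∀ a b : α, b ≤ neg a ↔ a * b ≤ d
  le_neg_iff_mul_le' : ∀ a b : α, b ≤ neg a ↔ b * a ≤ d

namespace IsCyclicNeg

theorem antitone {α : Type*} [Preorder α] [Mul α] {d : α} {neg : α → α}
    (hneg : IsCyclicNeg d neg) : Antitone neg := by
  intro b a hba
  have le_neg_neg : a ≤ neg (neg a) := by
    rw [hneg.le_neg_iff_mul_le', ← hneg.le_neg_iff_mul_le]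
  rw [hneg.le_neg_iff_mul_le, ← hneg.le_neg_iff_mul_le']
  exact hba.trans le_neg_neg

section Semigroup

variable {α : Type*} [Preorder α] [Semigroup α] {d : α} {neg : α → α} {a b : α}

theorem mul_neg_le_neg (hneg : IsCyclicNeg d neg) (hab : a * b ≤ a) : b * neg a ≤ neg a := by
  rw [hneg.le_neg_iff_mul_le, ← mul_assoc, ← hneg.le_neg_iff_mul_le]
  exact hneg.antitone hab

theorem neg_mul_le_neg (hneg : IsCyclicNeg d neg) (hba : b * a ≤ a) : neg a * b ≤ neg a := by
  rw [hneg.le_neg_iff_mul_le', mul_assoc, ← hneg.le_neg_iff_mul_le']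
  exact hneg.antitone hba

theorem neg_mul_le_neg_iff (hneg : IsCyclicNeg d neg) :
    neg a * b ≤ neg a ↔ a * neg a * b ≤ d := by
  rw [hneg.le_neg_iff_mul_le, mul_assoc]

end Semigroup

end IsCyclicNeg

theorem integrally_closed_of_quasi_weakening_general {α : Type*} [PartialOrder α] [Monoid α]
    {ldiv rdiv : α → α → α} (hldiv : ∀ a, GaloisConnection (a * ·) (ldiv a))
    (hrdiv : ∀ b, GaloisConnection (· * b) (rdiv · b))
    {d : α} (hcyc : ∀ a, ldiv a d = rdiv d a)
    (h : ∀ a b, a * ldiv a d * b ≤ d → b ≤ 1) :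
    ∀ a, ldiv a a = 1 ∧ rdiv a a = 1 := by
  have hneg : IsCyclicNeg d (ldiv · d) :=
    { le_neg_iff_mul_le := fun a b => (hldiv a b d).symm
      le_neg_iff_mul_le' := fun a b => hcyc a ▸ (hrdiv a b d).symm }
  have le_one_of_mul_le {a b : α} (hba : b * a ≤ a) : b ≤ 1 :=
    h a b (hneg.neg_mul_le_neg_iff.1 (hneg.neg_mul_le_neg hba))
  have le_one_of_mul_le' {a b : α} (hab : a * b ≤ a) : b ≤ 1 :=
    le_one_of_mul_le (hneg.mul_neg_le_neg hab)
  intro a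
  constructor
  · exact le_antisymm (le_one_of_mul_le' ((hldiv a).l_u_le a)) ((hldiv a).le_u (mul_one a).le)
  · exact le_antisymm (le_one_of_mul_le ((hrdiv a).l_u_le a)) ((hrdiv a).le_u (one_mul a).le)

/-- An e-cyclic residuated lattice satisfying the quasiequation
`x·(~x)·y ≤ e ⟹ y ≤ e` is integrally closed. -/
theorem integrally_closed_of_quasi_weakening {α : Type*} [ResiduatedLattice α]
    (hcyc : ∀ a : α, ldiv a 1 = rdiv 1 a)
    (h : ∀ a b : α, a * ldiv a 1 * b ≤ 1 → b ≤ 1) :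
    ∀ a : α, ldiv a a = 1 ∧ rdiv a a = 1 :=
  integrally_closed_of_quasi_weakening_general
    (fun a b c => (le_ldiv_iff a b c).symm) (fun b a c => (le_rdiv_iff a b c).symm) hcyc h
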